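/- Let n ≥ 1 and m ≥ 2, let H be a compact metrizable space with n+1 distinct points v_1, …, v_{n+1}, and set H^× = H \ {v_1, …, v_{n+1}}. Let (X_1,d_1,a_1), …, (X_{n+1},d_{n+1},a_{n+1}) be pointed proper CAT(0) metric spaces with d_pGH((X_i,d_i,a_i),(X_j,d_j,a_j)) > 0 for all distinct i, j. Then there exists a continuous map F : H × {1,…,m} → 𝒫𝒵 (where {1,…,m} carries the discrete topology) such that (1) F(v_i, j) = (X_i,d_i,a_i) for all i ∈ {1,…,n+1} and j ∈ {1,…,m}, and (2) F is injective on H^× × {1,…,m}. -/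

import Mathlib

/-- A metric space is *geodesic* if any two points `x, y` are joined by a
geodesic, i.e. a map `γ : [0,1] → X` with `γ 0 = x`, `γ 1 = y` and
`dist (γ s) (γ t) = |s - t| * dist x y`. -/
def IsGeodesicSpace (X : Type*) [MetricSpace X] : Prop :=
  ∀ x y : X, ∃ γ : ℝ → X, γ 0 = x ∧ γ 1 = y ∧
    ∀ s ∈ Set.Icc (0 : ℝ) 1, ∀ t ∈ Set.Icc (0 : ℝ) 1,
      dist (γ s) (γ t) = |s - t| * dist x y

/-- A metric space is *CAT(0)* if it is geodesic and every geodesic triangle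
satisfies the Euclidean comparison inequality; equivalently (the formulation
used here), the comparison (CN) inequality holds along every geodesic. -/
def IsCAT0Space (X : Type*) [MetricSpace X] : Prop :=
  IsGeodesicSpace X ∧
  ∀ x y z : X, ∀ γ : ℝ → X, γ 0 = x → γ 1 = y →
    (∀ s ∈ Set.Icc (0 : ℝ) 1, ∀ t ∈ Set.Icc (0 : ℝ) 1,
      dist (γ s) (γ t) = |s - t| * dist x y) →
    ∀ t ∈ Set.Icc (0 : ℝ) 1,
      dist z (γ t) ^ 2 ≤
        (1 - t) * dist z x ^ 2 + t * dist z y ^ 2 - t * (1 - t) * dist x y ^ 2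

/-- `IsAdmissiblePair a b t h` says that `h` is a `(t; a, b)`-admissible metric
on the disjoint union `X ⊕ Y`: it is a metric restricting to the given
distances on `X²` and `Y²`, with `h(a,b) < t`, and the closed ball of radius
`t⁻¹` around `a` (resp. `b`) is contained in the open `t`-neighbourhood of `Y`
(resp. `X`). -/
def IsAdmissiblePair {X Y : Type*} [MetricSpace X] [MetricSpace Y]
    (a : X) (b : Y) (t : ℝ) (h : X ⊕ Y → X ⊕ Y → ℝ) : Prop :=
  (∀ p q, h p q = 0 ↔ p = q) ∧
  (∀ p q, h p q = h q p) ∧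
  (∀ p q r, h p r ≤ h p q + h q r) ∧
  (∀ x y : X, h (Sum.inl x) (Sum.inl y) = dist x y) ∧
  (∀ x y : Y, h (Sum.inr x) (Sum.inr y) = dist x y) ∧
  h (Sum.inl a) (Sum.inr b) < t ∧
  (∀ p, h (Sum.inl a) p ≤ t⁻¹ → ∃ y : Y, h p (Sum.inr y) < t) ∧
  (∀ p, h (Sum.inr b) p ≤ t⁻¹ → ∃ x : X, h p (Sum.inl x) < t)

/-- The pointed Gromov–Hausdorff distance
`d_pGH = min { d'_pGH, 1/2 }`, where `d'_pGH` is the infimum of all `t > 0`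
for which a `(t; a, b)`-admissible metric on `X ⊕ Y` exists.  (Taking `sInf`
of the set together with `1/2` implements the truncation at `1/2`.) -/
noncomputable def pghDistOf (X Y : Type*) [MetricSpace X] [MetricSpace Y]
    (a : X) (b : Y) : ℝ :=
  sInf (insert (1 / 2 : ℝ)
    {t : ℝ | 0 < t ∧ ∃ h : X ⊕ Y → X ⊕ Y → ℝ, IsAdmissiblePair a b t h})

/-- A pointed proper metric space: a (proper) metric space together with a
base point. -/
structure PointedProperMetricSpace : Type 1 where
  carrier : Type
  [met : MetricSpace carrier]
  [prop : ProperSpace carrier]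
  pt : carrier

attribute [instance] PointedProperMetricSpace.met PointedProperMetricSpace.prop

/-- The pointed Gromov–Hausdorff distance between pointed proper metric
spaces. -/
noncomputable def pghDist (p q : PointedProperMetricSpace) : ℝ :=
  pghDistOf p.carrier q.carrier p.pt q.pt

/-- The topology induced by the pointed Gromov–Hausdorff distance (generated
by its open balls). -/
instance : TopologicalSpace PointedProperMetricSpace :=
  TopologicalSpace.generateFrom
    {s | ∃ (p : PointedProperMetricSpace) (ε : ℝ), 0 < ε ∧
      s = {q | pghDist p q < ε}}

/-- Two pointed metric spaces are identified in `𝒫ℳ` when there is a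
base-point-preserving isometric bijection between them. -/
instance pointedIsometrySetoid : Setoid PointedProperMetricSpace where
  r p q := ∃ e : p.carrier ≃ᵢ q.carrier, e p.pt = q.pt
  iseqv := by
    refine ⟨fun p => ⟨IsometryEquiv.refl _, rfl⟩, ?_, ?_⟩
    · rintro p q ⟨e, he⟩
      exact ⟨e.symm, by rw [← he, IsometryEquiv.symm_apply_apply]⟩
    · rintro p q r ⟨e, he⟩ ⟨f, hf⟩
      exact ⟨e.trans f, by rw [IsometryEquiv.trans_apply, he, hf]⟩

/-- `𝒫ℳ`: the space of pointed isometry classes of pointed proper metric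
spaces, with the (quotient of the) pointed Gromov–Hausdorff topology. -/
def PGHSpace : Type 1 := Quotient pointedIsometrySetoid

instance : TopologicalSpace PGHSpace :=
  instTopologicalSpaceQuotient

/-- The pointed isometry class of a pointed proper metric space. -/
def PGHSpace.mk (X : Type) [MetricSpace X] [ProperSpace X] (a : X) : PGHSpace :=
  Quotient.mk pointedIsometrySetoid ⟨X, a⟩

/-- `𝒫𝒵`: the subset of `𝒫ℳ` consisting of pointed proper CAT(0)
spaces. -/
def PGHCat0 : Set PGHSpace :=
  {x | IsCAT0Space (Quotient.out (α := PointedProperMetricSpace) x).carrier}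

/-! ## Geodesics and CAT(0) criteria -/

/-- `γ` is a geodesic from `x` to `y`. -/
def IsGeo {X : Type*} [MetricSpace X] (x y : X) (γ : ℝ → X) : Prop :=
  γ 0 = x ∧ γ 1 = y ∧ ∀ s ∈ Set.Icc (0 : ℝ) 1, ∀ t ∈ Set.Icc (0 : ℝ) 1,
      dist (γ s) (γ t) = |s - t| * dist x y

/-- There is a geodesic from `x` to `y` along which the CN inequality holds. -/
def GoodPair {X : Type*} [MetricSpace X] (x y : X) : Prop :=
  ∃ γ : ℝ → X, IsGeo x y γ ∧ ∀ z : X, ∀ t ∈ Set.Icc (0 : ℝ) 1,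
      dist z (γ t) ^ 2 ≤
        (1 - t) * dist z x ^ 2 + t * dist z y ^ 2 - t * (1 - t) * dist x y ^ 2

lemma IsGeo.dist_left {X : Type*} [MetricSpace X] {x y : X} {γ : ℝ → X} (h : IsGeo x y γ)
    {t : ℝ} (ht : t ∈ Set.Icc (0 : ℝ) 1) : dist x (γ t) = t * dist x y := by
  have := h.2.2 0 (by simp) t ht
  rw [h.1] at this
  rw [this, zero_sub, abs_neg, abs_of_nonneg ht.1]

lemma IsGeo.dist_right {X : Type*} [MetricSpace X] {x y : X} {γ : ℝ → X} (h : IsGeo x y γ)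
    {t : ℝ} (ht : t ∈ Set.Icc (0 : ℝ) 1) : dist (γ t) y = (1 - t) * dist x y := by
  have := h.2.2 t ht 1 (by simp)
  rw [h.2.1] at this
  rw [this, abs_sub_comm, abs_of_nonneg (by linarith [ht.2])]

lemma cat0_iff {X : Type*} [MetricSpace X] :
    IsCAT0Space X ↔ ∀ x y : X, GoodPair x y := by
  constructor
  · intro h x y
    obtain ⟨γ, h0, h1, h2⟩ := h.1 x y
    exact ⟨γ, ⟨h0, h1, h2⟩, fun z t ht => h.2 x y z γ h0 h1 h2 t ht⟩
  · intro h
    refine ⟨fun x y => ?_, fun x y z γ h0 h1 h2 t ht => ?_⟩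
    · obtain ⟨γ, hγ, -⟩ := h x y
      exact ⟨γ, hγ⟩
    · obtain ⟨η, hη, hc⟩ := h x y
      have hγ : IsGeo x y γ := ⟨h0, h1, h2⟩
      have := hc (γ t) t ht
      rw [dist_comm (γ t) x, hγ.dist_left ht, hγ.dist_right ht] at this
      have h3 : dist (γ t) (η t) ^ 2 ≤ 0 := by nlinarith
      have h4 : dist (γ t) (η t) = 0 := by
        have := sq_nonneg (dist (γ t) (η t))
        exact pow_eq_zero_iff (two_ne_zero) |>.1 (le_antisymm h3 this)
      rw [dist_eq_zero.1 h4]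
      exact hc z t ht

lemma convex_dist_real {a b D t d : ℝ} (ha : 0 ≤ a) (hb : 0 ≤ b) (h : |a - b| ≤ D)
    (ht : t ∈ Set.Icc (0 : ℝ) 1)
    (hd : d ^ 2 ≤ (1 - t) * a ^ 2 + t * b ^ 2 - t * (1 - t) * D ^ 2) :
    d ≤ (1 - t) * a + t * b := by
  have h0 : 0 ≤ t := ht.1
  have h1 : 0 ≤ 1 - t := by linarith [ht.2]
  have h2 : (a - b) ^ 2 ≤ D ^ 2 := sq_le_sq' (by linarith [(abs_le.1 h).1]) (abs_le.1 h).2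
  have h3 : t * (1 - t) * (a - b) ^ 2 ≤ t * (1 - t) * D ^ 2 :=
    mul_le_mul_of_nonneg_left h2 (mul_nonneg h0 h1)
  refine (abs_le_of_sq_le_sq' ?_ (by positivity)).2
  nlinarith

lemma convex_dist {X : Type*} [MetricSpace X] {x y z w : X} {t : ℝ}
    (ht : t ∈ Set.Icc (0 : ℝ) 1)
    (h : dist z w ^ 2 ≤
        (1 - t) * dist z x ^ 2 + t * dist z y ^ 2 - t * (1 - t) * dist x y ^ 2) :
    dist z w ≤ (1 - t) * dist z x + t * dist z y := by
  refine convex_dist_real dist_nonneg dist_nonneg ?_ ht h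
  rw [dist_comm z x, dist_comm z y]
  exact abs_dist_sub_le x y z

lemma cat0_subset {X : Type*} [MetricSpace X] (hX : IsCAT0Space X) (S : Set X)
    (hS : ∀ x ∈ S, ∀ y ∈ S, ∃ γ, IsGeo x y γ ∧ ∀ t ∈ Set.Icc (0 : ℝ) 1, γ t ∈ S) :
    IsCAT0Space S := by
  classical
  rw [cat0_iff]
  rintro ⟨x, hx⟩ ⟨y, hy⟩
  obtain ⟨γ, hγ, hm⟩ := hS x hx y hy
  have key : ∀ t ∈ Set.Icc (0 : ℝ) 1,
      (((if h : γ t ∈ S then ⟨γ t, h⟩ else ⟨x, hx⟩ : S)) : X) = γ t := by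
    intro t ht
    rw [dif_pos (hm t ht)]
  refine ⟨fun t => if h : γ t ∈ S then ⟨γ t, h⟩ else ⟨x, hx⟩, ⟨?_, ?_, ?_⟩, ?_⟩
  · exact Subtype.ext ((key 0 (by simp)).trans hγ.1)
  · exact Subtype.ext ((key 1 (by simp)).trans hγ.2.1)
  · intro s hs t ht
    rw [Subtype.dist_eq, key s hs, key t ht]
    exact hγ.2.2 s hs t ht
  · intro z t ht
    rw [Subtype.dist_eq, key t ht]
    exact hX.2 x y z γ hγ.1 hγ.2.1 hγ.2.2 t ht

lemma cat0_isometryEquiv {X Y : Type*} [MetricSpace X] [MetricSpace Y] (e : X ≃ᵢ Y)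
    (hX : IsCAT0Space X) : IsCAT0Space Y := by
  rw [cat0_iff] at hX ⊢
  intro x y
  obtain ⟨γ, hγ, hc⟩ := hX (e.symm x) (e.symm y)
  refine ⟨fun t => e (γ t), ⟨?_, ?_, ?_⟩, ?_⟩
  · simp [hγ.1]
  · simp [hγ.2.1]
  · intro s hs t ht
    rw [e.dist_eq, hγ.2.2 s hs t ht, e.symm.dist_eq]
  · intro z t ht
    have := hc (e.symm z) t ht
    rw [e.symm.dist_eq, e.symm.dist_eq, e.symm.dist_eq, ← e.dist_eq, e.apply_symm_apply] at this
    exact this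

lemma cat0_ball {X : Type*} [MetricSpace X] (hX : IsCAT0Space X) (a : X) (r : ENNReal) :
    IsCAT0Space {x : X | ENNReal.ofReal (dist a x) ≤ r} := by
  refine cat0_subset hX _ fun x hx y hy => ?_
  obtain ⟨γ, h0, h1, h2⟩ := hX.1 x y
  refine ⟨γ, ⟨h0, h1, h2⟩, fun t ht => ?_⟩
  have h := convex_dist ht (hX.2 x y a γ h0 h1 h2 t ht)
  have h3 : dist a (γ t) ≤ max (dist a x) (dist a y) := by
    have h4 := le_max_left (dist a x) (dist a y)
    have h5 := le_max_right (dist a x) (dist a y)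
    have := mul_le_mul_of_nonneg_left h4 (by linarith [ht.2] : 0 ≤ 1 - t)
    have := mul_le_mul_of_nonneg_left h5 ht.1
    nlinarith
  refine (ENNReal.ofReal_le_ofReal h3).trans ?_
  rcases max_choice (dist a x) (dist a y) with h6 | h6 <;> rw [h6]
  · exact hx
  · exact hy

/-- Concatenation of good geodesics. -/
lemma good_concat {W : Type*} [MetricSpace W] {x p y : W} (hxy : dist x y = dist x p + dist p y)
    (h1 : GoodPair x p) (h2 : GoodPair p y)
    (hz : ∀ z, dist z y = dist z p + dist p y ∨ dist z x = dist z p + dist x p) :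
    GoodPair x y := by
  by_cases hA : dist x p = 0
  · rw [dist_eq_zero.1 hA]; exact h2
  by_cases hB : dist p y = 0
  · rw [← dist_eq_zero.1 hB]; exact h1
  have hA' : 0 < dist x p := lt_of_le_of_ne dist_nonneg (Ne.symm hA)
  have hB' : 0 < dist p y := lt_of_le_of_ne dist_nonneg (Ne.symm hB)
  obtain ⟨γ, hγ, hγc⟩ := h1
  obtain ⟨η, hη, hηc⟩ := h2
  set A := dist x p with hAdef
  set B := dist p y with hBdef
  have hD : 0 < A + B := by linarith
  let θ : ℝ → W := fun t => if t * (A + B) ≤ A then γ (t * (A + B) / A)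
    else η ((t * (A + B) - A) / B)
  have i1 : ∀ t ∈ Set.Icc (0 : ℝ) 1, t * (A + B) ≤ A → t * (A + B) / A ∈ Set.Icc (0 : ℝ) 1 := by
    intro t ht h
    exact ⟨div_nonneg (mul_nonneg ht.1 hD.le) hA'.le, (div_le_one hA').2 h⟩
  have i2 : ∀ t ∈ Set.Icc (0 : ℝ) 1, ¬ t * (A + B) ≤ A →
      (t * (A + B) - A) / B ∈ Set.Icc (0 : ℝ) 1 := by
    intro t ht h
    refine ⟨div_nonneg (by linarith) hB'.le, (div_le_one hB').2 ?_⟩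
    nlinarith [ht.2]
  have hcross : ∀ s ∈ Set.Icc (0 : ℝ) 1, ∀ t ∈ Set.Icc (0 : ℝ) 1, s * (A + B) ≤ A →
      ¬ t * (A + B) ≤ A → dist (θ s) (θ t) = |s - t| * (A + B) := by
    intro s hs t ht h h'
    simp only [θ, if_pos h, if_neg h']
    have e1 := hγ.dist_left (i1 s hs h)
    have e2 := hγ.dist_right (i1 s hs h)
    have e3 := hη.dist_left (i2 t ht h')
    have e4 := hη.dist_right (i2 t ht h')
    set q1 := γ (s * (A + B) / A)
    set q2 := η ((t * (A + B) - A) / B)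
    rw [← hAdef] at e1 e2
    rw [← hBdef] at e3 e4
    have f1 : dist x q1 = s * (A + B) := by rw [e1]; field_simp
    have f2 : dist q1 p = A - s * (A + B) := by rw [e2]; field_simp
    have f3 : dist p q2 = t * (A + B) - A := by rw [e3]; field_simp
    have f4 : dist q2 y = A + B - t * (A + B) := by rw [e4]; field_simp; ring
    have hst : s < t := by
      by_contra hcon
      push Not at hcon
      exact h' ((mul_le_mul_of_nonneg_right hcon hD.le).trans h)
    rw [abs_sub_comm, abs_of_pos (by linarith)]
    have t1 := dist_triangle q1 p q2
    have t2 := dist_triangle4 x q1 q2 y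
    apply le_antisymm <;> nlinarith
  refine ⟨θ, ⟨?_, ?_, ?_⟩, ?_⟩
  · simp only [θ]
    rw [if_pos (by simpa using hA'.le)]
    simpa using hγ.1
  · simp only [θ]
    rw [if_neg (by linarith)]
    rw [show (1 * (A + B) - A) / B = 1 by field_simp; ring]
    exact hη.2.1
  · intro s hs t ht
    rw [hxy]
    by_cases h : s * (A + B) ≤ A <;> by_cases h' : t * (A + B) ≤ A
    · simp only [θ, if_pos h, if_pos h']
      rw [hγ.2.2 _ (i1 s hs h) _ (i1 t ht h'), ← hAdef, ← sub_div, ← sub_mul, abs_div, abs_mul,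
        abs_of_pos hD, abs_of_pos hA']
      field_simp
    · exact hcross s hs t ht h h'
    · rw [dist_comm, abs_sub_comm]
      exact hcross t ht s hs h' h
    · simp only [θ, if_neg h, if_neg h']
      rw [hη.2.2 _ (i2 s hs h) _ (i2 t ht h'), ← hBdef, ← sub_div, sub_sub_sub_cancel_right,
        ← sub_mul, abs_div, abs_mul, abs_of_pos hD, abs_of_pos hB']
      field_simp
  · intro z t ht
    rw [hxy]
    set c := dist z p with hc
    set u := dist z x with hu
    set w := dist z y with hw
    have hc0 : 0 ≤ c := dist_nonneg
    have hu0 : 0 ≤ u := dist_nonneg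
    have hw0 : 0 ≤ w := dist_nonneg
    have tu1 : A ≤ u + c := by rw [hAdef, hu, dist_comm z x]; exact dist_triangle x z p
    have tu2 : c ≤ u + A := dist_triangle z x p
    have tw1 : B ≤ c + w := by rw [hBdef, hc, dist_comm z p]; exact dist_triangle p z y
    have tw2 : c ≤ w + B := by rw [hBdef, dist_comm p y]; exact dist_triangle z y p
    have u2 : (A - c) ^ 2 ≤ u ^ 2 := sq_le_sq' (by linarith) (by linarith)
    have w2 : (B - c) ^ 2 ≤ w ^ 2 := sq_le_sq' (by linarith) (by linarith)
    have hFA : c ^ 2 * (A + B) ≤ B * u ^ 2 + A * w ^ 2 - A * B * (A + B) := by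
      rcases hz z with h | h
      · rw [← hw, ← hc] at h
        rw [h]
        nlinarith [mul_le_mul_of_nonneg_left u2 hB'.le]
      · rw [← hu, ← hc] at h
        rw [h]
        nlinarith [mul_le_mul_of_nonneg_left w2 hA'.le]
    by_cases h : t * (A + B) ≤ A
    · simp only [θ, if_pos h]
      have := hγc z _ (i1 t ht h)
      rw [← hc, ← hu] at this
      refine this.trans ?_
      have e : (1 - t) * u ^ 2 + t * w ^ 2 - t * (1 - t) * (A + B) ^ 2
          - ((1 - t * (A + B) / A) * u ^ 2 + t * (A + B) / A * c ^ 2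
            - t * (A + B) / A * (1 - t * (A + B) / A) * A ^ 2)
          = (t / A) * (B * u ^ 2 + A * w ^ 2 - A * B * (A + B) - c ^ 2 * (A + B)) := by
        field_simp; ring
      have : 0 ≤ (t / A) * (B * u ^ 2 + A * w ^ 2 - A * B * (A + B) - c ^ 2 * (A + B)) :=
        mul_nonneg (div_nonneg ht.1 hA'.le) (by linarith)
      linarith
    · simp only [θ, if_neg h]
      have := hηc z _ (i2 t ht h)
      rw [← hc, ← hw] at this
      refine this.trans ?_
      have e : (1 - t) * u ^ 2 + t * w ^ 2 - t * (1 - t) * (A + B) ^ 2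
          - ((1 - (t * (A + B) - A) / B) * c ^ 2 + (t * (A + B) - A) / B * w ^ 2
            - (t * (A + B) - A) / B * (1 - (t * (A + B) - A) / B) * B ^ 2)
          = ((1 - t) / B) * (B * u ^ 2 + A * w ^ 2 - A * B * (A + B) - c ^ 2 * (A + B)) := by
        field_simp; ring
      have : 0 ≤ ((1 - t) / B) * (B * u ^ 2 + A * w ^ 2 - A * B * (A + B) - c ^ 2 * (A + B)) :=
        mul_nonneg (div_nonneg (by linarith [ht.2]) hB'.le) (by linarith)
      linarith

/-! ## Wedges -/

/-- `W` is the wedge of the pointed spaces `(Y i, a i)`. -/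
structure IsWedge {I : Type*} (Y : I → Type*) [∀ i, MetricSpace (Y i)] (a : ∀ i, Y i)
    {W : Type*} [MetricSpace W] (p : W) (f : ∀ i, Y i → W) : Prop where
  isom : ∀ i, Isometry (f i)
  base : ∀ i, f i (a i) = p
  surj : ∀ w, ∃ i y, f i y = w
  cross : ∀ i j, i ≠ j → ∀ x y, dist (f i x) (f j y) = dist x (a i) + dist (a j) y

lemma IsWedge.dist_base {I : Type*} {Y : I → Type*} [∀ i, MetricSpace (Y i)] {a : ∀ i, Y i}
    {W : Type*} [MetricSpace W] {p : W} {f : ∀ i, Y i → W} (h : IsWedge Y a p f) (i : I)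
    (y : Y i) : dist p (f i y) = dist (a i) y := by
  rw [← h.base i, (h.isom i).dist_eq]

lemma IsWedge.cat0 {I : Type*} {Y : I → Type*} [∀ i, MetricSpace (Y i)] {a : ∀ i, Y i}
    {W : Type*} [MetricSpace W] {p : W} {f : ∀ i, Y i → W} (h : IsWedge Y a p f)
    (hY : ∀ i, IsCAT0Space (Y i)) : IsCAT0Space W := by
  have same : ∀ i (x y : Y i), GoodPair (f i x) (f i y) := by
    intro i x y
    obtain ⟨γ, hγ, hc⟩ := cat0_iff.1 (hY i) x y
    refine ⟨fun t => f i (γ t), ⟨?_, ?_, ?_⟩, ?_⟩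
    · simp [hγ.1]
    · simp [hγ.2.1]
    · intro s hs t ht
      rw [(h.isom i).dist_eq, (h.isom i).dist_eq, hγ.2.2 s hs t ht]
    · intro z t ht
      obtain ⟨j, z, rfl⟩ := h.surj z
      by_cases hij : j = i
      · subst hij
        simp only [(h.isom j).dist_eq]
        exact hc z t ht
      · simp only [h.cross j i hij, (h.isom i).dist_eq]
        have h1 := hc (a i) t ht
        have h2 := convex_dist ht h1
        have h3 : 0 ≤ dist z (a j) := dist_nonneg
        nlinarith [mul_le_mul_of_nonneg_left h2 h3]
  rw [cat0_iff]
  intro w w'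
  obtain ⟨i, x, rfl⟩ := h.surj w
  obtain ⟨j, y, rfl⟩ := h.surj w'
  by_cases hij : i = j
  · subst hij; exact same i x y
  · have e1 : dist (f i x) p = dist x (a i) := by
      rw [dist_comm, h.dist_base, dist_comm]
    apply good_concat (p := p)
    · rw [h.cross i j hij, e1, h.dist_base]
    · rw [← h.base i]; exact same i _ _
    · rw [← h.base j]; exact same j _ _
    · intro z
      obtain ⟨k, z, rfl⟩ := h.surj z
      by_cases hk : k = j
      · right
        have hki : k ≠ i := fun hh => hij (hh.symm.trans hk)
        rw [h.cross k i hki, dist_comm (f k z) p, h.dist_base, e1, dist_comm z, dist_comm x]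
      · left
        rw [h.cross k j hk, dist_comm (f k z) p, h.dist_base, h.dist_base, dist_comm z]

/-- Auxiliary type carrying the wedge pseudo-metric. -/
structure PreWedge {I : Type} (Y : I → Type) (a : ∀ i, Y i) where
  idx : I
  val : Y idx

open Classical in
noncomputable instance {I : Type} (Y : I → Type) [∀ i, MetricSpace (Y i)] (a : ∀ i, Y i) :
    PseudoMetricSpace (PreWedge Y a) where
  dist u v := if h : u.idx = v.idx then dist (h ▸ u.val) v.val
    else dist u.val (a u.idx) + dist (a v.idx) v.val
  dist_self u := by simp
  dist_comm u v := by
    obtain ⟨i, x⟩ := u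
    obtain ⟨j, y⟩ := v
    by_cases h : i = j
    · subst h; simp [dist_comm]
    · simp only [h, Ne.symm h, dif_neg, not_false_eq_true]
      rw [dist_comm x, dist_comm _ y, add_comm]
  dist_triangle u v w := by
    obtain ⟨i, x⟩ := u
    obtain ⟨j, y⟩ := v
    obtain ⟨k, z⟩ := w
    by_cases h : i = j
    · subst h
      by_cases h' : i = k
      · subst h'
        simpa using dist_triangle x y z
      · simp only [h', dif_neg, not_false_eq_true, dif_pos]
        linarith [dist_triangle x y (a i)]
    · by_cases h' : j = k
      · subst h'
        simp only [h, dif_neg, not_false_eq_true, dif_pos]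
        linarith [dist_triangle (a j) y z]
      · by_cases h'' : i = k
        · subst h''
          simp only [h, h', dif_neg, not_false_eq_true, dif_pos]
          have := dist_triangle x (a i) z
          have : 0 ≤ dist (a j) y := dist_nonneg
          have : 0 ≤ dist y (a j) := dist_nonneg
          linarith
        · simp only [h, h', h'', dif_neg, not_false_eq_true]
          have : 0 ≤ dist (a j) y := dist_nonneg
          have : 0 ≤ dist y (a j) := dist_nonneg
          linarith

lemma exists_wedge {I : Type} [Nonempty I] (Y : I → Type) [∀ i, MetricSpace (Y i)]
    (a : ∀ i, Y i) : ∃ (W : Type) (_ : MetricSpace W) (p : W) (f : ∀ i, Y i → W),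
      IsWedge Y a p f := by
  classical
  have hd : ∀ u v : PreWedge Y a, dist u v = if h : u.idx = v.idx then dist (h ▸ u.val) v.val
    else dist u.val (a u.idx) + dist (a v.idx) v.val := fun _ _ => rfl
  obtain ⟨i0⟩ := ‹Nonempty I›
  refine ⟨SeparationQuotient (PreWedge Y a), inferInstance, SeparationQuotient.mk ⟨i0, a i0⟩,
    fun i y => SeparationQuotient.mk ⟨i, y⟩, ?_, ?_, ?_, ?_⟩
  · intro i
    refine Isometry.of_dist_eq fun x y => ?_
    rw [SeparationQuotient.dist_mk, hd]
    simp
  · intro i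
    rw [← dist_eq_zero, SeparationQuotient.dist_mk, hd]
    by_cases h : i = i0
    · subst h; simp
    · simp [h]
  · intro w
    obtain ⟨⟨i, y⟩, rfl⟩ := SeparationQuotient.surjective_mk w
    exact ⟨i, y, rfl⟩
  · intro i j hij x y
    rw [SeparationQuotient.dist_mk, hd]
    simp [hij]

/-! ## Planar cones -/

lemma complex_cn (x y z : ℂ) (t : ℝ) :
    dist z ((1 - t : ℝ) * x + (t : ℝ) * y) ^ 2 =
      (1 - t) * dist z x ^ 2 + t * dist z y ^ 2 - t * (1 - t) * dist x y ^ 2 := by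
  simp only [Complex.dist_eq, Complex.sq_norm, Complex.normSq_apply, Complex.sub_re,
    Complex.sub_im, Complex.add_re, Complex.add_im, Complex.re_ofReal_mul, Complex.im_ofReal_mul]
  ring

lemma complex_geo (x y : ℂ) :
    IsGeo x y (fun t : ℝ => ((1 - t : ℝ) : ℂ) * x + (t : ℝ) * y) := by
  refine ⟨by simp, by simp, fun s _ t _ => ?_⟩
  rw [Complex.dist_eq, Complex.dist_eq, ← Real.norm_eq_abs, ← Complex.norm_real (s - t), ← norm_mul,
    ← norm_neg]
  congr 1
  push_cast
  ring

lemma complex_cat0 : IsCAT0Space ℂ := by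
  rw [cat0_iff]
  intro x y
  exact ⟨_, complex_geo x y, fun z t _ => (complex_cn x y z t).le⟩

/-- The planar cone with apex `0` whose half-angle has cosine `κ`. -/
def PCone (κ : ℝ) : Set ℂ := {z | κ * ‖z‖ ≤ z.re}

lemma mem_pcone {κ : ℝ} {z : ℂ} : z ∈ PCone κ ↔ κ * ‖z‖ ≤ z.re := Iff.rfl

lemma pcone_cat0 {κ : ℝ} (hκ : 0 ≤ κ) : IsCAT0Space (PCone κ) := by
  refine cat0_subset complex_cat0 _ fun x hx y hy => ⟨_, complex_geo x y, fun t ht => ?_⟩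
  simp only [mem_pcone, Complex.add_re, Complex.re_ofReal_mul] at *
  have h1 : 0 ≤ 1 - t := by linarith [ht.2]
  have h0 := ht.1
  have hn : ‖((1 - t : ℝ) : ℂ) * x + (t : ℝ) * y‖ ≤ (1 - t) * ‖x‖ + t * ‖y‖ := by
    refine (norm_add_le _ _).trans ?_
    rw [norm_mul, norm_mul, Complex.norm_real, Complex.norm_real, Real.norm_of_nonneg h1,
      Real.norm_of_nonneg h0]
  have := mul_le_mul_of_nonneg_left hn hκ
  have := mul_le_mul_of_nonneg_left hx h1
  have := mul_le_mul_of_nonneg_left hy h0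
  nlinarith

instance pcone_proper (κ : ℝ) : ProperSpace (PCone κ) := by
  have : IsClosed (PCone κ) :=
    isClosed_le (continuous_const.mul continuous_norm) Complex.continuous_re
  exact ProperSpace.of_isClosed this

/-- The apex of the cone. -/
def pconeApex (κ : ℝ) : PCone κ := ⟨0, by simp [PCone]⟩

lemma pcone_dist_apex {κ : ℝ} (z : PCone κ) : dist (pconeApex κ) z = ‖(z : ℂ)‖ := by
  rw [Subtype.dist_eq, dist_comm]
  simp [pconeApex]

lemma norm_sub_sq_complex (z w : ℂ) :
    ‖z - w‖ ^ 2 = ‖z‖ ^ 2 + ‖w‖ ^ 2 - 2 * (z.re * w.re + z.im * w.im) := by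
  simp only [Complex.sq_norm, Complex.normSq_apply, Complex.sub_re, Complex.sub_im]
  ring

lemma norm_sq_complex (z : ℂ) : ‖z‖ ^ 2 = z.re ^ 2 + z.im ^ 2 := by
  simp only [Complex.sq_norm, Complex.normSq_apply]
  ring

/-- Points of the same norm `s`. -/
lemma pcone_upper {κ s : ℝ} (h0 : 0 < κ) (hs : 0 ≤ s) (z w : PCone κ)
    (hz : ‖(z : ℂ)‖ = s) (hw : ‖(w : ℂ)‖ = s) :
    dist z w ^ 2 ≤ 4 * s ^ 2 * (1 - κ ^ 2) := by
  obtain ⟨z, hz'⟩ := z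
  obtain ⟨w, hw'⟩ := w
  simp only [mem_pcone] at hz' hw' hz hw
  rw [hz] at hz'
  rw [hw] at hw'
  rw [Subtype.dist_eq, Complex.dist_eq, norm_sub_sq_complex, hz, hw]
  have h1 := norm_sq_complex z
  have h2 := norm_sq_complex w
  rw [hz] at h1
  rw [hw] at h2
  have hks : 0 ≤ κ * s := by positivity
  have h3 : (κ * s) * (κ * s) ≤ z.re * w.re := mul_le_mul hz' hw' hks (hks.trans hz')
  have h4 : (κ * s) * (κ * s) ≤ z.re * z.re := mul_le_mul hz' hz' hks (hks.trans hz')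
  have h5 : (κ * s) * (κ * s) ≤ w.re * w.re := mul_le_mul hw' hw' hks (hks.trans hw')
  nlinarith [sq_nonneg (z.im + w.im)]

lemma pcone_extremal {κ s : ℝ} (h0 : 0 < κ) (h1 : κ < 1) (hs : 0 ≤ s) :
    ∃ z w : PCone κ, ‖(z : ℂ)‖ = s ∧ ‖(w : ℂ)‖ = s ∧
      dist z w ^ 2 = 4 * s ^ 2 * (1 - κ ^ 2) := by
  have hk : 0 ≤ 1 - κ ^ 2 := by nlinarith
  have hq := Real.sq_sqrt hk
  set q := Real.sqrt (1 - κ ^ 2)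
  have n1 : ‖(⟨s * κ, s * q⟩ : ℂ)‖ = s := by
    refine (sq_eq_sq₀ (norm_nonneg _) hs).1 ?_
    rw [norm_sq_complex]
    simp only
    nlinarith
  have n2 : ‖(⟨s * κ, - (s * q)⟩ : ℂ)‖ = s := by
    refine (sq_eq_sq₀ (norm_nonneg _) hs).1 ?_
    rw [norm_sq_complex]
    simp only
    nlinarith
  have m1 : (⟨s * κ, s * q⟩ : ℂ) ∈ PCone κ := by
    rw [mem_pcone, n1, mul_comm]
  have m2 : (⟨s * κ, - (s * q)⟩ : ℂ) ∈ PCone κ := by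
    rw [mem_pcone, n2, mul_comm]
  refine ⟨⟨⟨s * κ, s * q⟩, m1⟩, ⟨⟨s * κ, - (s * q)⟩, m2⟩, n1, n2, ?_⟩
  · rw [Subtype.dist_eq, Complex.dist_eq, norm_sub_sq_complex, n1, n2]
    simp only
    nlinarith

/-- A point of given norm. -/
lemma pcone_exists {κ s : ℝ} (h1 : κ < 1) (hs : 0 ≤ s) :
    ∃ z : PCone κ, dist (pconeApex κ) z = s := by
  refine ⟨⟨(s : ℂ), ?_⟩, ?_⟩
  · simp only [mem_pcone, Complex.norm_real, Complex.ofReal_re,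
      Real.norm_of_nonneg hs]
    nlinarith
  · rw [pcone_dist_apex]
    simp [abs_of_nonneg hs]

lemma pcone_strict {κ : ℝ} (h0 : 0 < κ) (z w : PCone κ) (hz : z ≠ pconeApex κ)
    (hw : w ≠ pconeApex κ) :
    dist z w < dist (pconeApex κ) z + dist (pconeApex κ) w := by
  have hz1 : 0 < dist (pconeApex κ) z := dist_pos.2 hz.symm
  have hw1 : 0 < dist (pconeApex κ) w := dist_pos.2 hw.symm
  simp only [pcone_dist_apex] at hz1 hw1 ⊢
  obtain ⟨z, hz'⟩ := z
  obtain ⟨w, hw'⟩ := w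
  simp only at hz1 hw1 ⊢
  rw [mem_pcone] at hz' hw'
  rw [Subtype.dist_eq, Complex.dist_eq]
  refine lt_of_pow_lt_pow_left₀ 2 (by positivity) ?_
  rw [norm_sub_sq_complex]
  have a1 : 0 < z.re := lt_of_lt_of_le (by positivity) hz'
  have a2 : 0 < w.re := lt_of_lt_of_le (by positivity) hw'
  have b1 : |z.im| ≤ ‖z‖ := Complex.abs_im_le_norm z
  have b2 : |w.im| ≤ ‖w‖ := Complex.abs_im_le_norm w
  have b3 : |z.im * w.im| ≤ ‖z‖ * ‖w‖ := by
    rw [abs_mul]; exact mul_le_mul b1 b2 (abs_nonneg _) (norm_nonneg _)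
  have := (abs_le.1 b3).1
  nlinarith [mul_pos a1 a2]

/-! ## Cone germs -/

/-- The `ρ`-ball of the cone is a wedge summand of a neighbourhood of `a` in `X`. -/
def HasGerm (κ ρ : ℝ) {X : Type*} [MetricSpace X] (a : X) (f : PCone κ → X) : Prop :=
  (∀ y y', dist (pconeApex κ) y ≤ ρ → dist (pconeApex κ) y' ≤ ρ →
    dist (f y) (f y') = dist y y') ∧
  f (pconeApex κ) = a ∧
  ∀ z, dist a z ≤ ρ → (∃ y, dist (pconeApex κ) y ≤ ρ ∧ f y = z) ∨
    ∀ y, dist (pconeApex κ) y ≤ ρ → dist z (f y) = dist a z + dist a (f y)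

lemma HasGerm.dist_base {κ ρ : ℝ} {X : Type*} [MetricSpace X] {a : X} {f : PCone κ → X}
    (h : HasGerm κ ρ a f) (hρ : 0 ≤ ρ) {y : PCone κ} (hy : dist (pconeApex κ) y ≤ ρ) :
    dist a (f y) = dist (pconeApex κ) y := by
  rw [← h.2.1, h.1 _ _ (by simpa using hρ) hy]

/-- Two germs which share a point: the second cone is at most as wide. -/
lemma germ_le {κ κ' ρ ρ' : ℝ} {X : Type*} [MetricSpace X] {a : X} {f : PCone κ → X}
    {g : PCone κ' → X} (hκ : 0 < κ) (hκ1 : κ < 1) (hκ' : 0 < κ')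
    (hf : HasGerm κ ρ a f) (hg : HasGerm κ' ρ' a g)
    {y : PCone κ} {y' : PCone κ'} (hy : dist (pconeApex κ) y ≤ ρ)
    (hy' : dist (pconeApex κ') y' ≤ ρ') (hyy : f y = g y') (hne : f y ≠ a) : κ' ≤ κ := by
  have hρ : 0 ≤ ρ := dist_nonneg.trans hy
  have hρ' : 0 ≤ ρ' := dist_nonneg.trans hy'
  have e1 := hf.dist_base hρ hy
  have e2 := hg.dist_base hρ' hy'
  rw [← hyy] at e2
  have hs : 0 < dist a (f y) := dist_pos.2 hne.symm
  set s := dist a (f y)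
  have hyne : y ≠ pconeApex κ := by
    rintro rfl; exact hne hf.2.1
  have step : ∀ z : PCone κ, ‖(z : ℂ)‖ = s →
      ∃ z' : PCone κ', ‖(z' : ℂ)‖ = s ∧ dist (pconeApex κ') z' ≤ ρ' ∧ g z' = f z := by
    intro z hz
    have hz1 : dist (pconeApex κ) z = s := by rw [pcone_dist_apex, hz]
    have hzρ : dist (pconeApex κ) z ≤ ρ := by rw [hz1, e1]; exact hy
    have hfz : dist a (f z) = s := by rw [hf.dist_base hρ hzρ, hz1]
    rcases hg.2.2 (f z) (by rw [hfz, e2]; exact hy') with ⟨z', h1, h2⟩ | h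
    · refine ⟨z', ?_, h1, h2⟩
      rw [← pcone_dist_apex, ← hg.dist_base hρ' h1, h2, hfz]
    · exfalso
      have h3 := h y' hy'
      rw [← hyy, hf.1 z y hzρ hy, hfz] at h3
      have hzne : z ≠ pconeApex κ := by
        rintro rfl
        simp at hz1
        exact hs.ne hz1
      have := pcone_strict hκ z y hzne hyne
      rw [hz1, ← e1] at this
      exact this.ne h3
  obtain ⟨z, w, hz, hw, hzw⟩ := pcone_extremal hκ hκ1 hs.le
  obtain ⟨z', hz1, hz2, hz3⟩ := step z hz
  obtain ⟨w', hw1, hw2, hw3⟩ := step w hw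
  have hzρ : dist (pconeApex κ) z ≤ ρ := by rw [pcone_dist_apex, hz, e1]; exact hy
  have hwρ : dist (pconeApex κ) w ≤ ρ := by rw [pcone_dist_apex, hw, e1]; exact hy
  have hd : dist z' w' = dist z w := by
    rw [← hg.1 z' w' hz2 hw2, hz3, hw3, hf.1 z w hzρ hwρ]
  have h5 := pcone_upper hκ' hs.le z' w' hz1 hw1
  rw [hd, hzw] at h5
  have h6 : 1 - κ ^ 2 ≤ 1 - κ' ^ 2 := le_of_mul_le_mul_left h5 (by positivity)
  nlinarith

lemma germ_eq {κ κ' ρ ρ' : ℝ} {X : Type*} [MetricSpace X] {a : X} {f : PCone κ → X}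
    {g : PCone κ' → X} (hκ : 0 < κ) (hκ1 : κ < 1) (hκ' : 0 < κ') (hκ1' : κ' < 1)
    (hf : HasGerm κ ρ a f) (hg : HasGerm κ' ρ' a g)
    {y : PCone κ} {y' : PCone κ'} (hy : dist (pconeApex κ) y ≤ ρ)
    (hy' : dist (pconeApex κ') y' ≤ ρ') (hyy : f y = g y') (hne : f y ≠ a) : κ' = κ :=
  le_antisymm (germ_le hκ hκ1 hκ' hf hg hy hy' hyy hne)
    (germ_le hκ' hκ1' hκ hg hf hy' hy hyy.symm (hyy ▸ hne))

/-- The set of cone angles occurring as germs at `a`. -/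
def GermSet {X : Type*} [MetricSpace X] (a : X) : Set ℝ :=
  {κ | 0 < κ ∧ κ < 1 ∧ ∃ ρ > 0, ∃ f : PCone κ → X, HasGerm κ ρ a f}

lemma germSet_countable {X : Type*} [MetricSpace X] [TopologicalSpace.SeparableSpace X] (a : X) :
    (GermSet a).Countable := by
  obtain ⟨D, hDc, hDd⟩ := TopologicalSpace.exists_countable_dense X
  have key : ∀ κ : GermSet a, ∃ d : D, (d : X) ≠ a ∧ ∃ ρ, ∃ f : PCone (κ : ℝ) → X,
      HasGerm κ ρ a f ∧ ∃ y, dist (pconeApex κ) y ≤ ρ ∧ f y = d := by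
    rintro ⟨κ, h0, h1, ρ, hρ, f, hf⟩
    obtain ⟨y, hy⟩ := pcone_exists h1 (s := ρ / 2) (by positivity)
    have hyρ : dist (pconeApex κ) y ≤ ρ := by rw [hy]; linarith
    obtain ⟨d, hd, hdD⟩ := hDd.exists_dist_lt (f y) (ε := ρ / 4) (by positivity)
    have hfy := hf.dist_base hρ.le hyρ
    rw [hy] at hfy
    have t1 := dist_triangle a d (f y)
    have t2 := dist_triangle a (f y) d
    have t3 := dist_comm d (f y)
    have hda : d ≠ a := by
      rintro rfl
      rw [dist_self] at t1
      linarith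
    refine ⟨⟨d, hd⟩, hda, ρ, f, hf, ?_⟩
    rcases hf.2.2 d (by linarith) with h | h
    · exact h
    · exfalso
      have h2 := h y hyρ
      have := @dist_nonneg _ _ a d
      linarith
  choose d hd ρ f hf y hy hyd using key
  have hinj : Function.Injective d := by
    intro κ κ' h
    refine Subtype.ext ?_
    have := germ_eq κ'.2.1 κ'.2.2.1 κ.2.1 κ.2.2.1 (hf κ') (hf κ) (hy κ') (hy κ)
      (by rw [hyd, hyd, h]) (by rw [hyd]; exact hd _)
    exact this
  have : Countable D := hDc.to_subtype
  exact hinj.countable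

lemma pcone_self_germ (κ ρ : ℝ) : HasGerm κ ρ (pconeApex κ) id :=
  ⟨fun _ _ _ _ => rfl, rfl, fun z hz => Or.inl ⟨z, hz, rfl⟩⟩

/-! ## Truncated wedges -/

section WTrunc

/-- The union of the balls of radius `r i` in the branches of the wedge. -/
def WTrunc {I : Type} {Y : I → Type} [∀ i, MetricSpace (Y i)] (a : ∀ i, Y i)
    {W : Type} (f : ∀ i, Y i → W) (r : I → ENNReal) : Set W :=
  {w | ∃ i y, f i y = w ∧ ENNReal.ofReal (dist (a i) y) ≤ r i}

variable {I : Type} {Y : I → Type} [∀ i, MetricSpace (Y i)] {a : ∀ i, Y i}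
    {W : Type} [MetricSpace W] {p : W} {f : ∀ i, Y i → W}

lemma mem_trunc (hw : IsWedge Y a p f) (r : I → ENNReal) (i : I) (y : Y i) :
    f i y ∈ WTrunc a f r ↔ ENNReal.ofReal (dist (a i) y) ≤ r i := by
  constructor
  · rintro ⟨j, y', h, h'⟩
    by_cases hij : j = i
    · subst hij
      rw [(hw.isom j).injective h] at h'
      exact h'
    · have := hw.cross j i hij y' y
      rw [h, dist_self] at this
      have h1 : dist (a i) y = 0 := by
        have := @dist_nonneg _ _ y' (a j)
        have := @dist_nonneg _ _ (a i) y
        linarith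
      rw [h1]; simp
  · intro h
    exact ⟨i, y, rfl, h⟩

lemma base_mem_trunc (hw : IsWedge Y a p f) (r : I → ENNReal) : p ∈ WTrunc a f r := by
  obtain ⟨i, y, -⟩ := hw.surj p
  rw [← hw.base i, mem_trunc hw]
  simp

lemma trunc_wedge (hw : IsWedge Y a p f) (r : I → ENNReal) :
    IsWedge (fun i => {y : Y i | ENNReal.ofReal (dist (a i) y) ≤ r i})
      (fun i => ⟨a i, by simp⟩) (⟨p, base_mem_trunc hw r⟩ : WTrunc a f r)
      (fun i y => ⟨f i y, (mem_trunc hw r i y).2 y.2⟩) where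
  isom i := Isometry.of_dist_eq fun x y => by
    rw [Subtype.dist_eq, Subtype.dist_eq, (hw.isom i).dist_eq]
  base i := Subtype.ext (hw.base i)
  surj := by
    rintro ⟨w, i, y, rfl, h⟩
    exact ⟨i, ⟨y, h⟩, rfl⟩
  cross i j hij x y := hw.cross i j hij x y

lemma trunc_cat0 (hw : IsWedge Y a p f) (hY : ∀ i, IsCAT0Space (Y i)) (r : I → ENNReal) :
    IsCAT0Space (WTrunc a f r) :=
  (trunc_wedge hw r).cat0 fun i => cat0_ball (hY i) (a i) (r i)

lemma trunc_proper (hw : IsWedge Y a p f) [∀ i, ProperSpace (Y i)] (r : I → ENNReal)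
    (hr : ∀ δ : ℝ, 0 < δ → {i | ENNReal.ofReal δ < r i}.Finite) :
    ProperSpace (WTrunc a f r) := by
  have key : ∀ R : ℝ, IsCompact (WTrunc a f r ∩ Metric.closedBall p R) := by
    intro R
    let C : I → Set W := fun i =>
      f i '' (Metric.closedBall (a i) R ∩ {y | ENNReal.ofReal (dist (a i) y) ≤ r i})
    have hC : ∀ i, IsCompact (C i) := by
      intro i
      refine IsCompact.image ?_ (hw.isom i).continuous
      refine (isCompact_closedBall _ _).inter_right ?_
      exact isClosed_le (ENNReal.continuous_ofReal.comp (continuous_const.dist continuous_id))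
        continuous_const
    have hCsub : ∀ i, C i ⊆ WTrunc a f r ∩ Metric.closedBall p R := by
      rintro i _ ⟨y, ⟨hy1, hy2⟩, rfl⟩
      refine ⟨⟨i, y, rfl, hy2⟩, ?_⟩
      rw [Metric.mem_closedBall, dist_comm, hw.dist_base, dist_comm]
      exact hy1
    rw [isCompact_iff_ultrafilter_le_nhds]
    intro F hF
    by_cases hex : ∃ i, C i ∈ F
    · obtain ⟨i, hi⟩ := hex
      obtain ⟨x, hx, hx'⟩ := isCompact_iff_ultrafilter_le_nhds.1 (hC i) F
        (Filter.le_principal_iff.2 hi)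
      exact ⟨x, hCsub i hx, hx'⟩
    · push Not at hex
      have hS : WTrunc a f r ∩ Metric.closedBall p R ∈ F := Filter.le_principal_iff.1 hF
      have hR : 0 ≤ R := by
        obtain ⟨w, hw1⟩ := F.nonempty_of_mem hS
        exact dist_nonneg.trans (Metric.mem_closedBall.1 hw1.2)
      refine ⟨p, ⟨base_mem_trunc hw r, by simpa using hR⟩, ?_⟩
      rw [Metric.nhds_basis_ball.ge_iff]
      intro δ hδ
      have hfin := hr (δ / 2) (by positivity)
      have hU : (⋃ i ∈ {i | ENNReal.ofReal (δ / 2) < r i}, C i) ∉ F := by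
        rw [Ultrafilter.finite_biUnion_mem_iff hfin]
        rintro ⟨i, -, hi⟩
        exact hex i hi
      rw [← Ultrafilter.compl_mem_iff_notMem] at hU
      filter_upwards [hS, hU] with w hw1 hw2
      obtain ⟨⟨i, y, rfl, hy⟩, hb⟩ := hw1
      rw [Metric.mem_closedBall, dist_comm, hw.dist_base] at hb
      rw [Metric.mem_ball, dist_comm, hw.dist_base]
      have : ¬ ENNReal.ofReal (δ / 2) < r i := by
        intro h
        apply hw2
        simp only [Set.mem_iUnion]
        refine ⟨i, h, y, ⟨?_, hy⟩, rfl⟩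
        rw [Metric.mem_closedBall, dist_comm]; exact hb
      have h2 := hy.trans (not_lt.1 this)
      rw [ENNReal.ofReal_le_ofReal_iff (by positivity)] at h2
      linarith
  refine ⟨fun x R => ?_⟩
  rw [Subtype.isCompact_iff]
  have : (Subtype.val '' Metric.closedBall x R : Set W) =
      (WTrunc a f r ∩ Metric.closedBall p (R + dist (x : W) p)) ∩ Metric.closedBall (x : W) R := by
    ext w
    constructor
    · rintro ⟨⟨w, hw1⟩, hw2, rfl⟩
      rw [Metric.mem_closedBall, Subtype.dist_eq] at hw2
      refine ⟨⟨hw1, ?_⟩, hw2⟩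
      rw [Metric.mem_closedBall]
      have := dist_triangle w x p
      simp only at hw2
      linarith
    · rintro ⟨⟨h1, -⟩, h2⟩
      exact ⟨⟨w, h1⟩, h2, rfl⟩
  rw [this]
  exact (key _).inter_right Metric.isClosed_closedBall

lemma trunc_close (hw : IsWedge Y a p f) (hY : ∀ i, IsCAT0Space (Y i)) {r r' : I → ENNReal}
    {R δ : ℝ} (hδ : 0 ≤ δ)
    (h : ∀ i t, t ≤ R → ENNReal.ofReal t ≤ r i → ENNReal.ofReal (t - δ) ≤ r' i)
    {w : W} (hwt : w ∈ WTrunc a f r) (hwR : dist p w ≤ R) :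
    ∃ w' ∈ WTrunc a f r', dist w w' ≤ δ := by
  obtain ⟨i, y, rfl, hy⟩ := hwt
  rw [hw.dist_base] at hwR
  have h1 := h i _ hwR hy
  by_cases hd : dist (a i) y ≤ δ
  · exact ⟨p, base_mem_trunc hw r', by rw [dist_comm, hw.dist_base]; exact hd⟩
  · push Not at hd
    have hpos : 0 < dist (a i) y := lt_of_le_of_lt hδ hd
    obtain ⟨γ, h0, h1', h2⟩ := (hY i).1 (a i) y
    have hg : IsGeo (a i) y γ := ⟨h0, h1', h2⟩
    set D := dist (a i) y with hD
    have ht : (D - δ) / D ∈ Set.Icc (0 : ℝ) 1 :=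
      ⟨div_nonneg (by linarith) hpos.le, (div_le_one hpos).2 (by linarith)⟩
    refine ⟨f i (γ ((D - δ) / D)), ?_, ?_⟩
    · rw [mem_trunc hw, hg.dist_left ht, ← hD, div_mul_cancel₀ _ hpos.ne']
      exact h1
    · rw [(hw.isom i).dist_eq, dist_comm, hg.dist_right ht, ← hD]
      field_simp
      linarith

lemma trunc_decode (hw : IsWedge Y a p f) {r r' : I → ENNReal}
    (Φ : WTrunc a f r ≃ᵢ WTrunc a f r')
    (hΦ : Φ ⟨p, base_mem_trunc hw r⟩ = ⟨p, base_mem_trunc hw r'⟩)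
    (k : I) {κ : ℝ} (h0 : 0 < κ) (h1 : κ < 1) (e : PCone κ ≃ᵢ Y k)
    (he : e (pconeApex κ) = a k) (hno : ∀ l, l ≠ k → κ ∉ GermSet (a l))
    {s : ℝ} (hs : 0 ≤ s) (hsr : ENNReal.ofReal s ≤ r k) : ENNReal.ofReal s ≤ r' k := by
  rcases hs.eq_or_lt with rfl | hs
  · simp
  have hedist : ∀ y, dist (a k) (e y) = dist (pconeApex κ) y := by
    intro y; rw [← he, e.dist_eq]
  have hm : ∀ y : PCone κ, dist (pconeApex κ) y ≤ s → f k (e y) ∈ WTrunc a f r := by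
    intro y hy
    rw [mem_trunc hw, hedist]
    exact (ENNReal.ofReal_le_ofReal hy).trans hsr
  have hdist : ∀ (u v : WTrunc a f r), dist (Φ u : W) (Φ v : W) = dist (u : W) v := by
    intro u v
    rw [← Subtype.dist_eq, Φ.dist_eq, Subtype.dist_eq]
  have hpd : ∀ u : WTrunc a f r, dist p (Φ u : W) = dist p (u : W) := by
    intro u
    have := hdist ⟨p, base_mem_trunc hw r⟩ u
    rwa [hΦ] at this
  obtain ⟨y0, hy0⟩ := pcone_exists (κ := κ) h1 hs.le
  obtain ⟨l, z0, hz0⟩ := hw.surj (Φ ⟨f k (e y0), hm y0 hy0.le⟩ : W)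
  have hz0d : dist (a l) z0 = s := by
    rw [← hw.dist_base, hz0, hpd, hw.dist_base, hedist, hy0]
  have hsl : ENNReal.ofReal s ≤ r' l := by
    have : f l z0 ∈ WTrunc a f r' := by rw [hz0]; exact Subtype.coe_prop _
    rw [mem_trunc hw, hz0d] at this
    exact this
  by_cases hlk : l = k
  · rw [← hlk]; exact hsl
  exfalso
  have hF : ∀ y : PCone κ, ∃ z : Y l, ∀ hy : dist (pconeApex κ) y ≤ s,
      f l z = Φ ⟨f k (e y), hm y hy⟩ := by
    intro y
    by_cases hy : dist (pconeApex κ) y ≤ s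
    swap
    · exact ⟨a l, fun h => absurd h hy⟩
    by_cases hya : y = pconeApex κ
    · refine ⟨a l, fun h => ?_⟩
      have : (⟨f k (e y), hm y h⟩ : WTrunc a f r) = ⟨p, base_mem_trunc hw r⟩ :=
        Subtype.ext (show f k (e y) = p by rw [hya, he, hw.base])
      rw [this, hΦ, hw.base]
    · obtain ⟨j, z, hz⟩ := hw.surj (Φ ⟨f k (e y), hm y hy⟩ : W)
      by_cases hj : j = l
      · subst hj
        exact ⟨z, fun _ => hz⟩
      · exfalso
        have h2 := hw.cross j l hj z z0
        have h3 : dist (a j) z = dist (pconeApex κ) y := by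
          rw [← hw.dist_base, hz, hpd, hw.dist_base, hedist]
        have hy0a : y0 ≠ pconeApex κ := by
          rintro rfl
          rw [dist_self] at hy0
          exact hs.ne hy0
        have h4 := pcone_strict h0 y y0 hya hy0a
        rw [hz, hz0, hdist, (hw.isom k).dist_eq, e.dist_eq, dist_comm z, h3, hz0d] at h2
        rw [hy0] at h4
        exact h4.ne h2
  choose F hF using hF
  refine hno l hlk ⟨h0, h1, s, hs, F, ?_, ?_, ?_⟩
  · intro y y' hy hy'
    rw [← (hw.isom l).dist_eq, hF y hy, hF y' hy', hdist, (hw.isom k).dist_eq, e.dist_eq]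
  · apply (hw.isom l).injective
    rw [hF _ (by simpa using hs.le), hw.base]
    have : (⟨f k (e (pconeApex κ)), hm _ (by simpa using hs.le)⟩ : WTrunc a f r)
        = ⟨p, base_mem_trunc hw r⟩ := Subtype.ext (by simp only; rw [he, hw.base])
    rw [this, hΦ]
  · intro z hz
    have hzm : f l z ∈ WTrunc a f r' := by
      rw [mem_trunc hw]
      exact (ENNReal.ofReal_le_ofReal hz).trans hsl
    obtain ⟨u, hu⟩ := Φ.surjective ⟨f l z, hzm⟩
    have hu' : (Φ u : W) = f l z := by rw [hu]
    obtain ⟨j, x, hx⟩ := hw.surj (u : W)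
    have hxd : dist (a j) x = dist (a l) z := by
      rw [← hw.dist_base, hx, ← hpd, hu', hw.dist_base]
    by_cases hj : j = k
    · subst hj
      left
      obtain ⟨y, rfl⟩ := e.surjective x
      rw [hedist] at hxd
      have hy : dist (pconeApex κ) y ≤ s := by rw [hxd]; exact hz
      refine ⟨y, hy, ?_⟩
      apply (hw.isom l).injective
      rw [hF y hy, ← hu']
      congr 2
      exact Subtype.ext hx
    · right
      intro y hy
      rw [← (hw.isom l).dist_eq, hF y hy, ← hu', hdist, ← hx, hw.cross j k hj, dist_comm x, hxd,
        hedist, ← hw.dist_base l (F y), hF y hy, hpd, hw.dist_base, hedist]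

end WTrunc

/-! ## Continuity -/

lemma pghDistOf_le {X Y : Type*} [MetricSpace X] [MetricSpace Y] {a : X} {b : Y} {t : ℝ}
    (ht : 0 < t) {δ : ℝ} (hδ : 0 < δ) (g : X → Y → ℝ) (g0 : ∀ x y, δ ≤ g x y)
    (g1 : ∀ x x' y, g x y ≤ dist x x' + g x' y) (g2 : ∀ x y y', g x y ≤ g x y' + dist y' y)
    (g3 : ∀ x x' y, dist x x' ≤ g x y + g x' y) (g4 : ∀ x y y', dist y y' ≤ g x y + g x y')
    (hab : g a b < t) (h1 : ∀ x, dist a x ≤ t⁻¹ → ∃ y, g x y < t)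
    (h2 : ∀ y, dist b y ≤ t⁻¹ → ∃ x, g x y < t) : pghDistOf X Y a b ≤ t := by
  refine csInf_le ⟨0, ?_⟩ ?_
  · rintro s (rfl | ⟨hs, -⟩)
    · norm_num
    · exact hs.le
  · right
    let h : X ⊕ Y → X ⊕ Y → ℝ := fun p q => match p, q with
      | Sum.inl x, Sum.inl x' => dist x x'
      | Sum.inl x, Sum.inr y => g x y
      | Sum.inr y, Sum.inl x => g x y
      | Sum.inr y, Sum.inr y' => dist y y'
    refine ⟨ht, h, ?_, ?_, ?_, fun _ _ => rfl, fun _ _ => rfl, hab, ?_, ?_⟩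
    · rintro (x | y) (x' | y')
      · simp [h]
      · have := g0 x y'
        simp only [h, reduceCtorEq, iff_false]
        linarith
      · have := g0 x' y
        simp only [h, reduceCtorEq, iff_false]
        linarith
      · simp [h]
    · rintro (x | y) (x' | y') <;> simp [h, dist_comm]
    · rintro (x | y) (x' | y') (x'' | y'') <;> simp only [h]
      · exact dist_triangle _ _ _
      · exact g1 _ _ _
      · exact g3 _ _ _
      · exact g2 _ _ _
      · have := g1 x'' x' y
        rw [dist_comm] at this; linarith
      · exact g4 _ _ _
      · have := g2 x'' y y'
        rw [dist_comm] at this; linarith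
      · exact dist_triangle _ _ _
    · rintro (x | y) hp
      · exact h1 x hp
      · exact ⟨y, by simpa [h] using ht⟩
    · rintro (x | y) hp
      · exact ⟨x, by simpa [h] using ht⟩
      · exact h2 y hp

/-- Perturbing the second space inside a common ambient space. -/
lemma pgh_perturb {P W : Type*} [MetricSpace P] [MetricSpace W] {K K' : Set W} {p : W}
    (hp : p ∈ K) (hp' : p ∈ K') (b : P) {t t' δ : ℝ} (ht : 0 < t) (htt : t < t')
    (hδ : 0 < δ) (hδ1 : t + 2 * δ ≤ t') (hδ2 : t'⁻¹ + δ ≤ t⁻¹)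
    {h : P ⊕ K → P ⊕ K → ℝ} (hh : IsAdmissiblePair b (⟨p, hp⟩ : K) t h)
    (c1 : ∀ w ∈ K, dist p w ≤ 2 * t + t'⁻¹ → ∃ w' ∈ K', dist w w' ≤ δ)
    (c2 : ∀ w ∈ K', dist p w ≤ t'⁻¹ → ∃ w' ∈ K, dist w w' ≤ δ) :
    pghDistOf P K' b (⟨p, hp'⟩ : K') ≤ t' := by
  obtain ⟨m0, ms, mt, mP, mK, mb, mB1, mB2⟩ := hh
  have mnn : ∀ u v, 0 ≤ h u v := by
    intro u v
    have := mt u v u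
    rw [(m0 u u).2 rfl, ms v u] at this
    linarith
  have : Nonempty K := ⟨⟨p, hp⟩⟩
  let G : P → K' → K → ℝ := fun x w k => h (Sum.inl x) (Sum.inr k) + dist (k : W) (w : W)
  have Gnn : ∀ x w k, 0 ≤ G x w k := fun x w k => add_nonneg (mnn _ _) dist_nonneg
  have Gbdd : ∀ x w, BddBelow (Set.range (G x w)) := by
    intro x w
    refine ⟨0, ?_⟩
    rintro _ ⟨k, rfl⟩
    exact Gnn x w k
  have gle : ∀ x w k, (⨅ k, G x w k) ≤ G x w k := fun x w k => ciInf_le (Gbdd x w) k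
  have ht' : 0 < t' := ht.trans htt
  refine pghDistOf_le ht' hδ (fun x w => (⨅ k, G x w k) + δ) ?_ ?_ ?_ ?_ ?_ ?_ ?_ ?_
  · intro x w
    have : 0 ≤ ⨅ k, G x w k := le_ciInf (Gnn x w)
    linarith
  · intro x x' w
    have : (⨅ k, G x w k) - dist x x' ≤ ⨅ k, G x' w k := by
      refine le_ciInf fun k => ?_
      have e1 := gle x w k
      have e2 := mt (Sum.inl x) (Sum.inl x') (Sum.inr k)
      rw [mP] at e2
      simp only [G] at *
      linarith
    linarith
  · intro x w w'
    have : (⨅ k, G x w k) - dist w' w ≤ ⨅ k, G x w' k := by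
      refine le_ciInf fun k => ?_
      have e1 := gle x w k
      have e2 := dist_triangle (k : W) w' w
      rw [Subtype.dist_eq]
      simp only [G] at *
      linarith
    linarith
  · intro x x' w
    have : dist x x' - (⨅ k, G x w k) ≤ ⨅ k, G x' w k := by
      refine le_ciInf fun k' => ?_
      have : dist x x' - G x' w k' ≤ ⨅ k, G x w k := by
        refine le_ciInf fun k => ?_
        have e1 := mt (Sum.inl x) (Sum.inr k) (Sum.inl x')
        have e2 := mt (Sum.inr k) (Sum.inr k') (Sum.inl x')
        have e3 := ms (Sum.inr k') (Sum.inl x')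
        rw [mP] at e1
        rw [mK, Subtype.dist_eq] at e2
        have e4 := dist_triangle_right (k : W) (k' : W) (w : W)
        simp only [G] at *
        linarith
      linarith
    linarith
  · intro x w w'
    have : dist w w' - (⨅ k, G x w k) ≤ ⨅ k, G x w' k := by
      refine le_ciInf fun k' => ?_
      have : dist w w' - G x w' k' ≤ ⨅ k, G x w k := by
        refine le_ciInf fun k => ?_
        have e1 := mt (Sum.inr k) (Sum.inl x) (Sum.inr k')
        have e3 := ms (Sum.inr k) (Sum.inl x)
        rw [mK, Subtype.dist_eq] at e1
        have e4 := dist_triangle4 (w : W) (k : W) (k' : W) (w' : W)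
        rw [dist_comm (w : W) k] at e4
        rw [Subtype.dist_eq]
        simp only [G] at *
        linarith
      linarith
    linarith
  · have := gle b ⟨p, hp'⟩ ⟨p, hp⟩
    simp only [G, dist_self] at *
    linarith
  · intro x hx
    have hx2 : h (Sum.inl b) (Sum.inl x) ≤ t⁻¹ := by rw [mP]; linarith
    obtain ⟨k, hk⟩ := mB1 _ hx2
    have e1 := mt (Sum.inr ⟨p, hp⟩) (Sum.inl b) (Sum.inr k)
    have e2 := mt (Sum.inl b) (Sum.inl x) (Sum.inr k)
    have e3 := ms (Sum.inr ⟨p, hp⟩) (Sum.inl b)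
    rw [mK, Subtype.dist_eq] at e1
    rw [mP] at e2
    simp only at e1
    obtain ⟨w', hw', hd⟩ := c1 k k.2 (by linarith)
    refine ⟨⟨w', hw'⟩, ?_⟩
    have := gle x ⟨w', hw'⟩ k
    simp only [G] at *
    linarith
  · intro w hw
    rw [Subtype.dist_eq] at hw
    obtain ⟨k, hk, hd⟩ := c2 w w.2 hw
    have e1 := dist_triangle p (w : W) k
    obtain ⟨x, hx⟩ := mB2 (Sum.inr ⟨k, hk⟩) (by
      rw [mK, Subtype.dist_eq]
      simp only at hw ⊢
      linarith)
    refine ⟨x, ?_⟩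
    have := gle x w ⟨k, hk⟩
    rw [ms] at hx
    rw [dist_comm] at hd
    simp only [G] at *
    linarith

lemma continuous_of_close {Q : Type*} [TopologicalSpace Q] {W : Type} [MetricSpace W]
    (K : Q → Set W) (p : W) (hp : ∀ q, p ∈ K q) [∀ q, ProperSpace (K q)]
    (hK : ∀ q0 (R δ : ℝ), 0 < δ → ∀ᶠ q in nhds q0,
      (∀ w ∈ K q0, dist p w ≤ R → ∃ w' ∈ K q, dist w w' ≤ δ) ∧
      (∀ w ∈ K q, dist p w ≤ R → ∃ w' ∈ K q0, dist w w' ≤ δ)) :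
    Continuous (fun q => (⟨K q, ⟨p, hp q⟩⟩ : PointedProperMetricSpace)) := by
  refine continuous_generateFrom_iff.2 ?_
  rintro _ ⟨P, ε, hε, rfl⟩
  rw [isOpen_iff_mem_nhds]
  intro q0 hq0
  have hq0' : pghDistOf P.carrier (K q0) P.pt ⟨p, hp q0⟩ < ε := hq0
  obtain ⟨t, ht, htε⟩ := exists_lt_of_csInf_lt (Set.insert_nonempty _ _) hq0'
  rcases ht with rfl | ⟨ht, h, hh⟩
  · refine Filter.univ_mem' fun q => ?_
    refine lt_of_le_of_lt (csInf_le ⟨0, ?_⟩ (Set.mem_insert _ _)) htε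
    rintro s (rfl | ⟨hs, -⟩)
    · norm_num
    · exact hs.le
  · obtain ⟨t', h1, h2⟩ := exists_between htε
    have ht' : 0 < t' := ht.trans h1
    have hinv : t'⁻¹ < t⁻¹ := by gcongr
    set δ := min ((t' - t) / 2) (t⁻¹ - t'⁻¹)
    have hδ : 0 < δ := lt_min (by linarith) (by linarith)
    have d1 : δ ≤ (t' - t) / 2 := min_le_left _ _
    have d2 : δ ≤ t⁻¹ - t'⁻¹ := min_le_right _ _
    filter_upwards [hK q0 (2 * t + t'⁻¹) δ hδ] with q hq
    refine lt_of_le_of_lt ?_ h2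
    exact pgh_perturb (hp q0) (hp q) P.pt ht h1 hδ (by linarith) (by linarith) hh hq.1
      (fun w hw hw2 => hq.2 w hw (by linarith))

/-! ## Radii -/

lemma radii_one {Q : Type*} [TopologicalSpace Q] (ρ : Q → ENNReal) (hρ : Continuous ρ) (q0 : Q)
    (R δ : ℝ) (hδ : 0 < δ) : ∀ᶠ q in nhds q0, ∀ t ≤ R,
      (ENNReal.ofReal t ≤ ρ q0 → ENNReal.ofReal (t - δ) ≤ ρ q) ∧
      (ENNReal.ofReal t ≤ ρ q → ENNReal.ofReal (t - δ) ≤ ρ q0) := by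
  have hA : ∀ᶠ q in nhds q0, ∀ t ≤ R,
      (ENNReal.ofReal t ≤ ρ q0 → ENNReal.ofReal (t - δ) ≤ ρ q) := by
    have hm : ∀ t ≤ R, ENNReal.ofReal t ≤ ρ q0 →
        ENNReal.ofReal t ≤ min (ENNReal.ofReal R) (ρ q0) :=
      fun t ht h => le_min (ENNReal.ofReal_le_ofReal ht) h
    have hle : min (ENNReal.ofReal R) (ρ q0) ≤ ρ q0 := min_le_right _ _
    have hfin : min (ENNReal.ofReal R) (ρ q0) ≠ ⊤ :=
      ((min_le_left _ _).trans_lt ENNReal.ofReal_lt_top).ne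
    set M := min (ENNReal.ofReal R) (ρ q0)
    by_cases hM : M = 0
    · refine Filter.Eventually.of_forall fun q t ht h => ?_
      have h1 := hm t ht h
      rw [ENNReal.ofReal_sub _ hδ.le]
      rw [hM] at h1
      exact (tsub_le_self.trans h1).trans (zero_le)
    · have hlt : M - ENNReal.ofReal δ < ρ q0 :=
        (ENNReal.sub_lt_self hfin hM (by simpa using hδ)).trans_le hle
      filter_upwards [hρ.continuousAt.eventually_const_lt hlt] with q hq t ht h
      rw [ENNReal.ofReal_sub _ hδ.le]
      exact (tsub_le_tsub_right (hm t ht h) _).trans hq.le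
  have hB : ∀ᶠ q in nhds q0, ∀ t ≤ R,
      (ENNReal.ofReal t ≤ ρ q → ENNReal.ofReal (t - δ) ≤ ρ q0) := by
    by_cases htop : ρ q0 = ⊤
    · refine Filter.Eventually.of_forall fun q t ht h => ?_
      rw [htop]; exact le_top
    · have hlt : ρ q0 < ρ q0 + ENNReal.ofReal δ :=
        ENNReal.lt_add_right htop (by simpa using hδ)
      filter_upwards [hρ.continuousAt.eventually_lt_const hlt] with q hq t ht h
      rw [ENNReal.ofReal_sub _ hδ.le]
      exact tsub_le_iff_right.2 (h.trans hq.le)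
  filter_upwards [hA, hB] with q h1 h2 t ht
  exact ⟨h1 t ht, h2 t ht⟩

lemma radii_all {Q : Type*} [TopologicalSpace Q] {I : Type} (r : Q → I → ENNReal)
    (hr : ∀ i, Continuous fun q => r q i)
    (hs : ∀ δ : ℝ, 0 < δ → {i | ∃ q, ENNReal.ofReal δ < r q i}.Finite) (q0 : Q)
    (R δ : ℝ) (hδ : 0 < δ) : ∀ᶠ q in nhds q0, ∀ i, ∀ t ≤ R,
      (ENNReal.ofReal t ≤ r q0 i → ENNReal.ofReal (t - δ) ≤ r q i) ∧
      (ENNReal.ofReal t ≤ r q i → ENNReal.ofReal (t - δ) ≤ r q0 i) := by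
  have h1 := (Filter.eventually_all_finite (hs δ hδ)).2
    (fun i _ => radii_one (fun q => r q i) (hr i) q0 R δ hδ)
  filter_upwards [h1] with q hq i t ht
  by_cases hi : i ∈ {i | ∃ q, ENNReal.ofReal δ < r q i}
  · exact hq i hi t ht
  · have hz : ∀ q, ENNReal.ofReal t ≤ r q i → ENNReal.ofReal (t - δ) = 0 := by
      intro q h
      have h2 : ¬ ENNReal.ofReal δ < r q i := fun h3 => hi ⟨q, h3⟩
      have h4 := h.trans (not_lt.1 h2)
      rw [ENNReal.ofReal_le_ofReal_iff hδ.le] at h4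
      exact ENNReal.ofReal_of_nonpos (by linarith)
    exact ⟨fun h => by rw [hz _ h]; exact zero_le, fun h => by rw [hz _ h]; exact zero_le⟩

/-! ## The family of branches -/

/-- The branches: the given spaces and countably many cones. -/
def Fam {n : ℕ} (X : Fin (n + 1) → Type) (c : ℕ → ℝ) : Fin (n + 1) ⊕ ℕ → Type
  | Sum.inl i => X i
  | Sum.inr k => PCone (c k)

noncomputable instance famMetric {n : ℕ} (X : Fin (n + 1) → Type) [inst : ∀ i, MetricSpace (X i)] (c : ℕ → ℝ) :
    ∀ i, MetricSpace (Fam X c i)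
  | Sum.inl i => inst i
  | Sum.inr k => (inferInstance : MetricSpace (PCone (c k)))

instance famProper {n : ℕ} (X : Fin (n + 1) → Type) [∀ i, MetricSpace (X i)]
    [inst : ∀ i, ProperSpace (X i)] (c : ℕ → ℝ) : ∀ i, ProperSpace (Fam X c i)
  | Sum.inl i => inst i
  | Sum.inr k => pcone_proper (c k)

/-- The base points of the branches. -/
noncomputable def famBase {n : ℕ} {X : Fin (n + 1) → Type} (a : ∀ i, X i) (c : ℕ → ℝ) :
    ∀ i, Fam X c i
  | Sum.inl i => a i
  | Sum.inr k => pconeApex (c k)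

lemma fam_cat0 {n : ℕ} (X : Fin (n + 1) → Type) [∀ i, MetricSpace (X i)] (c : ℕ → ℝ)
    (hX : ∀ i, IsCAT0Space (X i)) (hc : ∀ k, 0 < c k) : ∀ i, IsCAT0Space (Fam X c i)
  | Sum.inl i => hX i
  | Sum.inr k => pcone_cat0 (hc k).le

lemma pcone_germSet {κ κ' : ℝ} (h0 : 0 < κ') (h1 : κ' < 1)
    (h : κ ∈ GermSet (pconeApex κ')) : κ' = κ := by
  obtain ⟨k0, k1, ρ, hρ, f, hf⟩ := h
  obtain ⟨y, hy⟩ := pcone_exists k1 hρ.le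
  have hd := hf.dist_base hρ.le hy.le
  refine germ_eq k0 k1 h0 h1 hf (pcone_self_germ κ' ρ) hy.le (y' := f y) (by rw [hd, hy]) rfl ?_
  intro h
  rw [h, dist_self, hy] at hd
  exact hρ.ne hd

lemma fam_no_germ {n : ℕ} (X : Fin (n + 1) → Type) [∀ i, MetricSpace (X i)] (a : ∀ i, X i)
    (c : ℕ → ℝ) (hcinj : Function.Injective c) (hc0 : ∀ k, 0 < c k) (hc1 : ∀ k, c k < 1)
    (hcb : ∀ k i, c k ∉ GermSet (a i)) (k : ℕ) :
    ∀ l, l ≠ Sum.inr k → c k ∉ GermSet (famBase a c l)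
  | Sum.inl i, _ => hcb k i
  | Sum.inr k', h => fun hg => h (by
      rw [hcinj (pcone_germSet (hc0 k') (hc1 k') hg)])

lemma exists_angles {n : ℕ} (X : Fin (n + 1) → Type) [∀ i, MetricSpace (X i)]
    [∀ i, ProperSpace (X i)] (a : ∀ i, X i) : ∃ c : ℕ → ℝ, Function.Injective c ∧
      (∀ k, 0 < c k) ∧ (∀ k, c k < 1) ∧ ∀ k i, c k ∉ GermSet (a i) := by
  have hb : (⋃ i, GermSet (a i)).Countable := Set.countable_iUnion fun i => germSet_countable (a i)
  have hinf : (Set.Ioo (0 : ℝ) 1 \ ⋃ i, GermSet (a i)).Infinite := by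
    intro hfin
    have : (Set.Ioo (0 : ℝ) 1).Countable :=
      (hfin.countable.union hb).mono (by rw [Set.sdiff_union_self]; exact Set.subset_union_left)
    have h2 := Cardinal.le_aleph0_iff_set_countable.2 this
    rw [Cardinal.mk_Ioo_real one_pos] at h2
    exact absurd h2 (not_le.2 Cardinal.aleph0_lt_continuum)
  let e := hinf.natEmbedding
  refine ⟨fun k => e k, fun k k' h => e.injective (Subtype.ext h), fun k => (e k).2.1.1,
    fun k => (e k).2.1.2, fun k i h => (e k).2.2 (Set.mem_iUnion.2 ⟨i, h⟩)⟩

/-- The radii of the given branches. -/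
lemma exists_radii_X {H : Type*} [MetricSpace H] {n : ℕ} (v : Fin (n + 1) → H)
    (hv : Function.Injective v) : ∃ r : H → Fin (n + 1) → ENNReal,
      (∀ i, Continuous fun h => r h i) ∧ (∀ i, r (v i) i = ⊤) ∧
      (∀ i k, k ≠ i → r (v i) k = 0) := by
  let M : ENNReal := ∑ i, ∑ k, if i = k then 0 else (edist (v i) (v k))⁻¹
  have hM : M ≠ ⊤ := by
    refine ENNReal.sum_ne_top.2 fun i _ => ENNReal.sum_ne_top.2 fun k _ => ?_
    split_ifs with h
    · simp
    · rw [ENNReal.inv_ne_top]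
      exact fun h' => h (hv (edist_eq_zero.1 h'))
  have hle : ∀ i k, i ≠ k → (edist (v i) (v k))⁻¹ ≤ M := by
    intro i k hik
    have h1 : (edist (v i) (v k))⁻¹ ≤ ∑ k, if i = k then 0 else (edist (v i) (v k))⁻¹ := by
      have := Finset.single_le_sum (f := fun k => if i = k then (0 : ENNReal)
        else (edist (v i) (v k))⁻¹) (fun _ _ => zero_le) (Finset.mem_univ k)
      simpa [hik] using this
    exact h1.trans (Finset.single_le_sum (f := fun i => ∑ k, if i = k then (0 : ENNReal)
        else (edist (v i) (v k))⁻¹) (fun _ _ => zero_le) (Finset.mem_univ i))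
  refine ⟨fun h i => (edist h (v i))⁻¹ - M, ?_, ?_, ?_⟩
  · intro i
    exact (ENNReal.continuous_sub_right M).comp
      (continuous_inv.comp (continuous_id.edist continuous_const))
  · intro i
    simp [hM]
  · intro i k hk
    exact tsub_eq_zero_of_le (hle i k hk.symm)

/-- The radii of the cones. -/
lemma exists_radii_cone {H : Type*} [MetricSpace H] [CompactSpace H] {n : ℕ} (m : ℕ)
    (v : Fin (n + 1) → H) : ∃ ρ : H × Fin m → ℕ → ℝ,
      (∀ k, Continuous fun q => ρ q k) ∧ (∀ q k, 0 ≤ ρ q k) ∧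
      (∀ q k, ρ q k ≤ (1 / 2) ^ k) ∧ (∀ i j k, ρ (v i, j) k = 0) ∧
      ∀ q q', q.1 ∉ Set.range v → (∀ k, ρ q k = ρ q' k) → q = q' := by
  have : Nonempty H := ⟨v 0⟩
  have hne : (Set.range v).Nonempty := ⟨v 0, 0, rfl⟩
  have hcl : IsClosed (Set.range v) := (Set.finite_range v).isClosed
  let ε : H → ℝ := fun h => min 1 (Metric.infDist h (Set.range v))
  have hε0 : ∀ h, 0 ≤ ε h := fun h => le_min zero_le_one Metric.infDist_nonneg
  have hε1 : ∀ h, ε h ≤ 1 := fun h => min_le_left _ _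
  have hεc : Continuous ε := continuous_const.min (Metric.continuous_infDist_pt _)
  have hεv : ∀ i, ε (v i) = 0 := by
    intro i
    have : Metric.infDist (v i) (Set.range v) = 0 := Metric.infDist_zero_of_mem ⟨i, rfl⟩
    simp only [ε, this]
    norm_num
  have hεp : ∀ h, h ∉ Set.range v → 0 < ε h := by
    intro h hh
    exact lt_min one_pos ((hcl.notMem_iff_infDist_pos hne).1 hh)
  let u : ℕ → H × Fin m → ℝ := fun k q => match k with
    | 0 => 1
    | 1 => (q.2 : ℝ) / m
    | (k + 2) => min 1 (dist q.1 (TopologicalSpace.denseSeq H k))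
  have hu0 : ∀ k q, 0 ≤ u k q := by
    intro k q
    match k with
    | 0 => exact zero_le_one
    | 1 => exact div_nonneg (Nat.cast_nonneg _) (Nat.cast_nonneg _)
    | (k + 2) => exact le_min zero_le_one dist_nonneg
  have hu1 : ∀ k q, u k q ≤ 1 := by
    intro k q
    match k with
    | 0 => exact le_rfl
    | 1 =>
      refine div_le_one_of_le₀ ?_ (Nat.cast_nonneg _)
      exact_mod_cast q.2.2.le
    | (k + 2) => exact min_le_left _ _
  have huc : ∀ k, Continuous (u k) := by
    intro k
    match k with
    | 0 => exact continuous_const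
    | 1 =>
      have : Continuous fun x : Fin m => (x : ℝ) / m := continuous_of_discreteTopology
      exact this.comp continuous_snd
    | (k + 2) => exact continuous_const.min (continuous_fst.dist continuous_const)
  refine ⟨fun q k => ε q.1 * u k q * (1 / 2) ^ k, ?_, ?_, ?_, ?_, ?_⟩
  · intro k
    exact ((hεc.comp continuous_fst).mul (huc k)).mul continuous_const
  · intro q k
    have := hε0 q.1
    have := hu0 k q
    positivity
  · intro q k
    have h1 : ε q.1 * u k q ≤ 1 := mul_le_one₀ (hε1 _) (hu0 k q) (hu1 k q)
    have : (0 : ℝ) ≤ (1 / 2) ^ k := by positivity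
    nlinarith
  · intro i j k
    simp [hεv]
  · rintro ⟨h, j⟩ ⟨h', j'⟩ hh heq
    simp only at hh
    have hp := hεp h hh
    have hm : 0 < m := Nat.lt_of_le_of_lt (Nat.zero_le _) j.2
    have e0 : ε h = ε h' := by simpa [u] using heq 0
    have eu : ∀ k, u k (h, j) = u k (h', j') := by
      intro k
      have h1 := heq k
      simp only [← e0] at h1
      have h2 : ((1 : ℝ) / 2) ^ k ≠ 0 := by positivity
      exact mul_left_cancel₀ hp.ne' (mul_right_cancel₀ h2 h1)
    have e1 : j = j' := by
      have h1 : (j : ℝ) / m = (j' : ℝ) / m := eu 1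
      have hm' : (m : ℝ) ≠ 0 := by exact_mod_cast hm.ne'
      rw [div_left_inj' hm'] at h1
      exact Fin.ext (by exact_mod_cast h1)
    have e2 : h = h' := by
      by_contra hne
      have hd : 0 < dist h h' := dist_pos.2 hne
      obtain ⟨k, hk⟩ := (TopologicalSpace.denseRange_denseSeq H).exists_dist_lt h
        (ε := min 1 (dist h h' / 2)) (lt_min one_pos (by linarith))
      have h1 : min 1 (dist h (TopologicalSpace.denseSeq H k)) =
        min 1 (dist h' (TopologicalSpace.denseSeq H k)) := eu (k + 2)
      have h2 := hk.trans_le (min_le_left _ _)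
      have h3 := hk.trans_le (min_le_right _ _)
      have h4 := dist_triangle_right h h' (TopologicalSpace.denseSeq H k)
      rw [min_eq_right h2.le] at h1
      rcases min_choice 1 (dist h' (TopologicalSpace.denseSeq H k)) with h5 | h5 <;>
        rw [h5] at h1 <;> linarith
    rw [e1, e2]

/-- Let `n ≥ 1`, `m ≥ 2`, let `H` be a compact metrizable
space with `n+1` distinct points `v 0, …, v n`, and let `H^× = H \ range v`.
Let `(X 0, a 0), …, (X n, a n)` be pointed proper CAT(0) metric spaces with
positive pairwise pointed Gromov–Hausdorff distances.  Then there is a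
continuous map `F : H × Fin m → 𝒫𝒵 ⊆ 𝒫ℳ` with `F (v i, j)` the pointed
isometry class of `(X i, a i)` for all `i, j`, and `F` injective on
`H^× × Fin m`. -/
theorem statement19 {H : Type*} [TopologicalSpace H] [CompactSpace H]
    [TopologicalSpace.MetrizableSpace H]
    (n m : ℕ) (hn : 1 ≤ n) (hm : 2 ≤ m)
    (v : Fin (n + 1) → H) (hv : Function.Injective v)
    (X : Fin (n + 1) → Type) [∀ i, MetricSpace (X i)] [∀ i, ProperSpace (X i)]
    (a : ∀ i, X i)
    (hcat : ∀ i, IsCAT0Space (X i))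
    (hdist : ∀ i j, i ≠ j → 0 < pghDistOf (X i) (X j) (a i) (a j)) :
    ∃ F : H × Fin m → PGHSpace,
      Continuous F ∧
      (∀ x, F x ∈ PGHCat0) ∧
      (∀ i j, F (v i, j) = PGHSpace.mk (X i) (a i)) ∧
      Set.InjOn F (((Set.range v)ᶜ) ×ˢ (Set.univ : Set (Fin m))) := by
  classical
  letI : MetricSpace H := TopologicalSpace.metrizableSpaceMetric H
  obtain ⟨c, hcinj, hc0, hc1, hcb⟩ := exists_angles X a
  obtain ⟨rX, hrc, hrtop, hrzero⟩ := exists_radii_X v hv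
  obtain ⟨ρ, hρc, hρ0, hρ1, hρv, hρinj⟩ := exists_radii_cone m v
  obtain ⟨W, instW, p, f, hw⟩ := exists_wedge (Fam X c) (famBase a c)
  have hY := fam_cat0 X c hcat hc0
  let r : H × Fin m → Fin (n + 1) ⊕ ℕ → ENNReal := fun q =>
    Sum.elim (rX q.1) (fun k => ENNReal.ofReal (ρ q k))
  have hr : ∀ i, Continuous fun q => r q i := by
    rintro (i | k)
    · exact (hrc i).comp continuous_fst
    · exact ENNReal.continuous_ofReal.comp (hρc k)
  have hs : ∀ δ : ℝ, 0 < δ → {i | ∃ q, ENNReal.ofReal δ < r q i}.Finite := by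
    intro δ hδ
    obtain ⟨N, hN⟩ := exists_pow_lt_of_lt_one hδ (by norm_num : (1 / 2 : ℝ) < 1)
    refine ((Set.finite_range (Sum.inl : Fin (n + 1) → Fin (n + 1) ⊕ ℕ)).union
      ((Set.finite_lt_nat N).image Sum.inr)).subset ?_
    rintro (i | k) ⟨q, hq⟩
    · exact Or.inl ⟨i, rfl⟩
    · refine Or.inr ⟨k, ?_, rfl⟩
      by_contra hk
      have hk' : N ≤ k := not_lt.1 hk
      have h1 : δ < ρ q k := (ENNReal.ofReal_lt_ofReal_iff_of_nonneg hδ.le).1 hq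
      have h2 : (1 / 2 : ℝ) ^ k ≤ (1 / 2) ^ N :=
        pow_le_pow_of_le_one (by norm_num) (by norm_num) hk'
      linarith [hρ1 q k]
  haveI hprop : ∀ q, ProperSpace (WTrunc (famBase a c) f (r q)) := fun q =>
    trunc_proper hw (r q) fun δ hδ => (hs δ hδ).subset fun i hi => ⟨q, hi⟩
  let G : H × Fin m → PointedProperMetricSpace := fun q =>
    ⟨WTrunc (famBase a c) f (r q), ⟨p, base_mem_trunc hw (r q)⟩⟩
  have hG : Continuous G := by
    refine continuous_of_close (fun q => WTrunc (famBase a c) f (r q)) p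
      (fun q => base_mem_trunc hw (r q)) ?_
    intro q0 R δ hδ
    filter_upwards [radii_all r hr hs q0 R δ hδ] with q hq
    exact ⟨fun w h1 h2 => trunc_close hw hY hδ.le (fun i t ht => (hq i t ht).1) h1 h2,
      fun w h1 h2 => trunc_close hw hY hδ.le (fun i t ht => (hq i t ht).2) h1 h2⟩
  refine ⟨fun q => Quotient.mk pointedIsometrySetoid (G q), continuous_quotient_mk'.comp hG,
    ?_, ?_, ?_⟩
  · intro q
    obtain ⟨e, -⟩ := Quotient.exact (Quotient.out_eq (Quotient.mk pointedIsometrySetoid (G q)))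
    exact cat0_isometryEquiv e.symm (trunc_cat0 hw hY (r q))
  · intro i j
    refine Quotient.sound ?_
    have hmem : ∀ y : X i, f (Sum.inl i) y ∈ WTrunc (famBase a c) f (r (v i, j)) := by
      intro y
      refine (mem_trunc hw _ (Sum.inl i) y).2 ?_
      have : r (v i, j) (Sum.inl i) = ⊤ := hrtop i
      rw [this]
      exact le_top
    let g : X i → WTrunc (famBase a c) f (r (v i, j)) := fun y => ⟨f (Sum.inl i) y, hmem y⟩
    have hgi : Isometry g := Isometry.of_dist_eq fun x y => (hw.isom (Sum.inl i)).dist_eq x y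
    have hgb : g (a i) = ⟨p, base_mem_trunc hw _⟩ := Subtype.ext (hw.base (Sum.inl i))
    have hgs : Function.Surjective g := by
      rintro ⟨w, l, y, rfl, hy⟩
      by_cases hl : l = Sum.inl i
      · subst hl
        exact ⟨y, rfl⟩
      · have hz : r (v i, j) l = 0 := by
          rcases l with l | k
          · exact hrzero i l (fun h => hl (by rw [h]))
          · have : ENNReal.ofReal (ρ (v i, j) k) = 0 := by rw [hρv]; simp
            exact this
        rw [hz, nonpos_iff_eq_zero, ENNReal.ofReal_eq_zero] at hy
        have hya : famBase a c l = y := dist_eq_zero.1 (le_antisymm hy dist_nonneg)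
        refine ⟨a i, ?_⟩
        rw [hgb]
        refine Subtype.ext ?_
        simp only
        rw [← hya, hw.base]
    let e : X i ≃ᵢ WTrunc (famBase a c) f (r (v i, j)) :=
      ⟨Equiv.ofBijective g ⟨hgi.injective, hgs⟩, hgi⟩
    refine ⟨e.symm, ?_⟩
    have : e (a i) = ⟨p, base_mem_trunc hw _⟩ := hgb
    exact (e.symm_apply_eq).2 this.symm
  · rintro q ⟨hq, -⟩ q' ⟨hq', -⟩ hqq
    obtain ⟨Φ, hΦ⟩ := Quotient.exact hqq
    have hng := fam_no_germ X a c hcinj hc0 hc1 hcb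
    refine hρinj q q' hq fun k => ?_
    have hΦ' : Φ.symm ⟨p, base_mem_trunc hw (r q')⟩ = ⟨p, base_mem_trunc hw (r q)⟩ :=
      (Φ.symm_apply_eq).2 hΦ.symm
    have h1 : ENNReal.ofReal (ρ q k) ≤ ENNReal.ofReal (ρ q' k) :=
      trunc_decode hw Φ hΦ (Sum.inr k) (hc0 k) (hc1 k)
        (IsometryEquiv.refl (PCone (c k))) rfl (hng k) (hρ0 q k) le_rfl
    have h2 : ENNReal.ofReal (ρ q' k) ≤ ENNReal.ofReal (ρ q k) :=
      trunc_decode hw Φ.symm hΦ' (Sum.inr k) (hc0 k) (hc1 k)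
        (IsometryEquiv.refl (PCone (c k))) rfl (hng k) (hρ0 q' k) le_rfl
    rw [ENNReal.ofReal_le_ofReal_iff (hρ0 _ _)] at h1 h2
    exact le_antisymm h1 h2
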